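/- Let $V$ be a finite-dimensional complex vector space and let $G \le GL(V)$ be a finite subgroup generated by a set of reflections of order 2 (involutions whose fixed-point subspace is a hyperplane). Then $\dim_{\mathbb{C}} (\Lambda V)^{G} = 2^{\dim_{\mathbb{C}} V^{G}}$, where $V^{G}$ is the subspace of $G$-fixed vectors in $V$. -/

import Mathlib

/-!
A reflection `s v = v + f v • a` with `f a ≠ 0` acts on the exterior algebra by
`x ↦ x + a ∧ (f ⌋ x)`, so it fixes `x` precisely when `f ⌋ x = 0`. Choose a subspace `U` of least
finite dimension with `x ∈ Λ U`. Then `f ⌋ x = 0` forces `U ≤ ker f`: otherwise, for `u ∈ U` with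
`f u = 1`, the projection `v ↦ v - f v • u` fixes `x` and maps `U` into the smaller subspace
`U ⊓ ker f`. Hence `U` is fixed pointwise by every reflection that fixes `x`, so that an invariant
`x` lies in `Λ (V ^ G)`.
-/

open Module LinearMap
open LinearEquiv (dilatransvections mem_dilatransvections_iff_finrank)

section CommRing

variable {R M : Type*} [CommRing R] [AddCommGroup M] [Module R M]

/-- The interior product `x ↦ f ⌋ x` of the exterior algebra, that is, the contraction of the
Clifford algebra of the zero quadratic form. -/
noncomputable def interiorProduct (f : Dual R M) : ExteriorAlgebra R M →ₗ[R] ExteriorAlgebra R M :=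
  CliffordAlgebra.contractLeft (Q := (0 : QuadraticForm R M)) f

theorem interiorProduct_algebraMap (f : Dual R M) (r : R) :
    interiorProduct f (algebraMap R _ r) = 0 :=
  CliffordAlgebra.contractLeft_algebraMap 0 f r

theorem interiorProduct_ι_mul (f : Dual R M) (v : M) (x : ExteriorAlgebra R M) :
    interiorProduct f (ExteriorAlgebra.ι R v * x) =
      f v • x - ExteriorAlgebra.ι R v * interiorProduct f x :=
  CliffordAlgebra.contractLeft_ι_mul f v x

theorem interiorProduct_interiorProduct (f : Dual R M) (x : ExteriorAlgebra R M) :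
    interiorProduct f (interiorProduct f x) = 0 :=
  CliffordAlgebra.contractLeft_contractLeft f x

theorem exteriorAlgebra_map_transvection_apply (f : Dual R M) (a : M) (x : ExteriorAlgebra R M) :
    ExteriorAlgebra.map (transvection f a) x =
      x + ExteriorAlgebra.ι R a * interiorProduct f x := by
  induction x using CliffordAlgebra.left_induction with
  | algebraMap r =>
    rw [interiorProduct_algebraMap, mul_zero, add_zero]
    exact AlgHom.commutes _ r
  | add x y hx hy => rw [map_add, map_add, hx, hy, mul_add, add_add_add_comm]
  | ι_mul x v hx =>
    change ExteriorAlgebra.map _ (ExteriorAlgebra.ι R v * x) = ExteriorAlgebra.ι R v * x +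
      ExteriorAlgebra.ι R a * interiorProduct f (ExteriorAlgebra.ι R v * x)
    have ι_mul_ι_mul (y : ExteriorAlgebra R M) :
        ExteriorAlgebra.ι R v * (ExteriorAlgebra.ι R a * y) =
          -(ExteriorAlgebra.ι R a * (ExteriorAlgebra.ι R v * y)) := by
      rw [← mul_assoc, eq_neg_of_add_eq_zero_left (ExteriorAlgebra.ι_add_mul_swap v a), neg_mul,
        mul_assoc]
    have ι_mul_ι_mul_self (y : ExteriorAlgebra R M) :
        ExteriorAlgebra.ι R a * (ExteriorAlgebra.ι R a * y) = 0 := by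
      rw [← mul_assoc, ExteriorAlgebra.ι_sq_zero, zero_mul]
    rw [map_mul, hx, ExteriorAlgebra.map_apply_ι, transvection.apply, interiorProduct_ι_mul,
      map_add, map_smul, add_mul, mul_add, mul_add, smul_mul_assoc, smul_mul_assoc,
      ι_mul_ι_mul, ι_mul_ι_mul_self, smul_zero, mul_sub, mul_smul_comm]
    abel

theorem exteriorAlgebra_map_transvection_eq_self_iff {f : Dual R M} {a : M} (hfa : IsUnit (f a))
    {x : ExteriorAlgebra R M} :
    ExteriorAlgebra.map (transvection f a) x = x ↔ interiorProduct f x = 0 := by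
  rw [exteriorAlgebra_map_transvection_apply, add_eq_left]
  refine ⟨fun h ↦ ?_, fun h ↦ by rw [h, mul_zero]⟩
  have smul_eq_zero : f a • interiorProduct f x = 0 := by
    simpa only [interiorProduct_ι_mul, interiorProduct_interiorProduct, mul_zero, sub_zero,
      map_zero] using congrArg (interiorProduct f) h
  exact hfa.smul_eq_zero.1 smul_eq_zero

variable {U W : Submodule R M} {x : ExteriorAlgebra R M}

/-- The image of `Λ U` in `Λ M`, for a submodule `U` of `M`. -/
def exteriorSubalgebra (U : Submodule R M) : Subalgebra R (ExteriorAlgebra R M) :=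
  (ExteriorAlgebra.map U.subtype).range

theorem map_mem_exteriorSubalgebra {T : M →ₗ[R] M} (hT : ∀ u ∈ U, T u ∈ W)
    (hx : x ∈ exteriorSubalgebra U) : ExteriorAlgebra.map T x ∈ exteriorSubalgebra W := by
  obtain ⟨y, rfl⟩ := hx
  refine ⟨ExteriorAlgebra.map (T.restrict hT) y, ?_⟩
  change (ExteriorAlgebra.map _).comp (ExteriorAlgebra.map _) y =
    (ExteriorAlgebra.map _).comp (ExteriorAlgebra.map _) y
  rw [ExteriorAlgebra.map_comp_map, ExteriorAlgebra.map_comp_map]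
  rfl

theorem exteriorSubalgebra_mono (h : U ≤ W) : exteriorSubalgebra U ≤ exteriorSubalgebra W :=
  fun x hx ↦ by simpa using map_mem_exteriorSubalgebra (T := .id) h hx

theorem map_eq_self_of_mem_exteriorSubalgebra {T : M →ₗ[R] M} (hT : ∀ u ∈ U, T u = u)
    (hx : x ∈ exteriorSubalgebra U) : ExteriorAlgebra.map T x = x := by
  obtain ⟨y, rfl⟩ := hx
  change (ExteriorAlgebra.map T).comp (ExteriorAlgebra.map U.subtype) y =
    ExteriorAlgebra.map U.subtype y
  rw [ExteriorAlgebra.map_comp_map]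
  congr 2
  ext u
  exact hT u u.2

theorem mem_exteriorSubalgebra_inf_ker (hx : x ∈ exteriorSubalgebra U) {f : Dual R M}
    (hfx : interiorProduct f x = 0) {u : M} (hu : u ∈ U) (hfu : f u = 1) :
    x ∈ exteriorSubalgebra (U ⊓ ker f) := by
  have fixes : ExteriorAlgebra.map (transvection f (-u)) x = x := by
    rw [exteriorAlgebra_map_transvection_apply, hfx, mul_zero, add_zero]
  rw [← fixes]
  refine map_mem_exteriorSubalgebra (fun v hv ↦ ?_) hx
  rw [transvection.apply]
  exact ⟨U.add_mem hv (U.smul_mem _ (U.neg_mem hu)), by simp [hfu]⟩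

theorem exists_fg_mem_exteriorSubalgebra (x : ExteriorAlgebra R M) :
    ∃ U : Submodule R M, U.FG ∧ x ∈ exteriorSubalgebra U := by
  induction x using ExteriorAlgebra.induction with
  | algebraMap r => exact ⟨⊥, Submodule.fg_bot, Subalgebra.algebraMap_mem _ r⟩
  | ι v =>
    refine ⟨R ∙ v, Submodule.fg_span_singleton v,
      ExteriorAlgebra.ι R ⟨v, Submodule.mem_span_singleton_self v⟩, ?_⟩
    exact ExteriorAlgebra.map_apply_ι _ _
  | mul x y hx hy =>
    obtain ⟨U, hU, hxU⟩ := hx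
    obtain ⟨W, hW, hyW⟩ := hy
    exact ⟨U ⊔ W, hU.sup hW, mul_mem (exteriorSubalgebra_mono le_sup_left hxU)
      (exteriorSubalgebra_mono le_sup_right hyW)⟩
  | add x y hx hy =>
    obtain ⟨U, hU, hxU⟩ := hx
    obtain ⟨W, hW, hyW⟩ := hy
    exact ⟨U ⊔ W, hU.sup hW, add_mem (exteriorSubalgebra_mono le_sup_left hxU)
      (exteriorSubalgebra_mono le_sup_right hyW)⟩

theorem finrank_exteriorAlgebra [Nontrivial R] [Module.Free R M] [Module.Finite R M] :
    finrank R (ExteriorAlgebra R M) = 2 ^ finrank R M := by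
  rw [finrank_eq_card_basis (finBasis R M).ExteriorAlgebra, Fintype.card_finset, Fintype.card_fin]

theorem transvection_pow_apply {f : Dual R M} {a : M} (hfa : f a = 0) (n : ℕ) (v : M) :
    (transvection f a ^ n) v = v + (n * f v) • a := by
  induction n with
  | zero => simp
  | succ n ih =>
    rw [pow_succ', Module.End.mul_apply, ih, transvection.apply]
    simp only [map_add, map_smul, hfa, smul_zero, add_zero, Nat.cast_succ]
    module

end CommRing

section Field

variable {K V : Type*} [Field K] [AddCommGroup V] [Module K V]

theorem finrank_exteriorSubalgebra (U : Submodule K V) [FiniteDimensional K U] :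
    finrank K (exteriorSubalgebra U) = 2 ^ finrank K U := by
  rw [← finrank_exteriorAlgebra]
  exact finrank_range_of_inj (f := (ExteriorAlgebra.map U.subtype).toLinearMap)
    (ExteriorAlgebra.map_injective_field U.ker_subtype)

theorem exists_mem_exteriorSubalgebra_forall_le_ker (x : ExteriorAlgebra K V) :
    ∃ U : Submodule K V, x ∈ exteriorSubalgebra U ∧
      ∀ f : Dual K V, interiorProduct f x = 0 → U ≤ ker f := by
  obtain ⟨U, ⟨hUfg, hxU⟩, hmin⟩ := exists_minimalFor_of_wellFoundedLT
    (fun U : Submodule K V ↦ U.FG ∧ x ∈ exteriorSubalgebra U) (fun U ↦ finrank K U)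
    (exists_fg_mem_exteriorSubalgebra x)
  refine ⟨U, hxU, fun f hfx u hu ↦ ?_⟩
  by_contra hfu
  have : FiniteDimensional K U := .of_fg hUfg
  have hx : x ∈ exteriorSubalgebra (U ⊓ ker f) :=
    mem_exteriorSubalgebra_inf_ker hxU hfx (U.smul_mem (f u)⁻¹ hu)
      (by rw [map_smul, smul_eq_mul, inv_mul_cancel₀ hfu])
  have hle : finrank K U ≤ finrank K ↥(U ⊓ ker f) :=
    hmin ⟨Submodule.FG.of_le hUfg inf_le_left, hx⟩ (Submodule.finrank_mono inf_le_left)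
  have heq : U ⊓ ker f = U := Submodule.eq_of_le_of_finrank_le inf_le_left hle
  exact hfu (inf_eq_left.1 heq hu)

/-- A diagonalizable reflection: the identity on the hyperplane `ker f` and multiplication by
`1 + f a ≠ 1` on the complementary line spanned by `a`, with no condition on the order of
`s`. It excludes the transvections, those with `f a = 0`. -/
def IsDiagonalizableReflection (s : V ≃ₗ[K] V) : Prop :=
  ∃ (f : Dual K V) (a : V), f a ≠ 0 ∧ s.toLinearMap = transvection f a

theorem mem_exteriorSubalgebra_of_forall_map_eq_self {S : Set (V ≃ₗ[K] V)}
    (hS : ∀ s ∈ S, IsDiagonalizableReflection s) {x : ExteriorAlgebra K V}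
    (hx : ∀ s ∈ S, ExteriorAlgebra.map s.toLinearMap x = x) :
    x ∈ exteriorSubalgebra (⨅ s ∈ S, s.toLinearMap.fixedSubmodule) := by
  obtain ⟨U, hxU, hU⟩ := exists_mem_exteriorSubalgebra_forall_le_ker x
  refine exteriorSubalgebra_mono (le_iInf₂ fun s hs u hu ↦ ?_) hxU
  obtain ⟨f, a, hfa, hsfa⟩ := hS s hs
  have hfx : interiorProduct f x = 0 :=
    (exteriorAlgebra_map_transvection_eq_self_iff hfa.isUnit).1 (hsfa ▸ hx s hs)
  have hfu : f u = 0 := hU f hfx hu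
  rw [mem_fixedSubmodule_iff, hsfa, transvection.apply, hfu, zero_smul, add_zero]

theorem isDiagonalizableReflection_of_pow_eq_one {s : V ≃ₗ[K] V} (hs : s ∈ dilatransvections K V)
    (hs_ne : s ≠ 1) {n : ℕ} (hn : (n : K) ≠ 0) (hpow : s ^ n = 1) :
    IsDiagonalizableReflection s := by
  obtain ⟨f, a, hsfa⟩ := hs
  refine ⟨f, a, fun hfa ↦ hs_ne (LinearEquiv.ext fun v ↦ ?_), hsfa⟩
  have transvection_pow_eq_one : transvection f a ^ n = 1 := by
    rw [← hsfa]
    exact (map_pow (LinearEquiv.automorphismGroup.toLinearMapMonoidHom) s n).symm.trans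
      (congrArg _ hpow)
  have hv : v + (n * f v) • a = v := by
    rw [← transvection_pow_apply hfa, transvection_pow_eq_one, Module.End.one_apply]
  have hva : f v • a = 0 := by simpa [mul_smul, hn] using hv
  change s.toLinearMap v = v
  rw [hsfa, transvection.apply, hva, add_zero]

theorem mem_dilatransvections_of_finrank_ker_add_one {s : V ≃ₗ[K] V}
    (hs : finrank K (ker (s.toLinearMap - LinearMap.id)) + 1 = finrank K V) :
    s ∈ dilatransvections K V := by
  have : FiniteDimensional K V := .of_finrank_pos (by lia)
  rw [mem_dilatransvections_iff_finrank]
  have := finrank_range_add_finrank_ker (s.toLinearMap - LinearMap.id)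
  lia

theorem finrank_exteriorAlgebra_invariants_of_reflection_group_general
    (G : Subgroup (V ≃ₗ[K] V)) (S : Set (V ≃ₗ[K] V)) (hgen : Subgroup.closure S = G)
    (hrefl : ∀ s ∈ S, IsDiagonalizableReflection s)
    (VG : Submodule K V) [FiniteDimensional K VG] (hVG : ∀ v : V, v ∈ VG ↔ ∀ g ∈ G, g v = v)
    (Inv : Submodule K (ExteriorAlgebra K V))
    (hInv : ∀ x : ExteriorAlgebra K V,
      x ∈ Inv ↔ ∀ g ∈ G, ExteriorAlgebra.map g.toLinearMap x = x) :
    finrank K Inv = 2 ^ finrank K VG := by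
  have hfixed : ⨅ s ∈ S, s.toLinearMap.fixedSubmodule ≤ VG := fun v hv ↦ by
    have hle : Subgroup.closure S ≤ MulAction.stabilizer (V ≃ₗ[K] V) v :=
      (Subgroup.closure_le _).2 fun s hs ↦ by
        simpa using (iInf₂_le s hs : _ ≤ s.toLinearMap.fixedSubmodule) hv
    exact (hVG v).2 fun g hg ↦ hle (hgen ▸ hg)
  have hInv_eq : Inv = (exteriorSubalgebra VG).toSubmodule := by
    ext x
    rw [hInv]
    refine ⟨fun hx ↦ ?_, fun hx g hg ↦ ?_⟩
    · exact exteriorSubalgebra_mono hfixed <| mem_exteriorSubalgebra_of_forall_map_eq_self hrefl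
        fun s hs ↦ hx s (hgen ▸ Subgroup.subset_closure hs)
    · exact map_eq_self_of_mem_exteriorSubalgebra (fun v hv ↦ (hVG v).1 hv g hg) hx
  rw [hInv_eq]
  exact finrank_exteriorSubalgebra VG

end Field

/-- If a finite subgroup `G` of `GL(V)` is generated by reflections of
order 2, then the space of `G`-invariants in the exterior algebra `Λ V` has dimension
`2 ^ dim V^G`. -/
theorem finrank_exteriorAlgebra_invariants_of_reflection_group
    {V : Type*} [AddCommGroup V] [Module ℂ V] [FiniteDimensional ℂ V]
    (G : Subgroup (V ≃ₗ[ℂ] V)) (hfin : (G : Set (V ≃ₗ[ℂ] V)).Finite)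
    (S : Set (V ≃ₗ[ℂ] V)) (hgen : Subgroup.closure S = G)
    (hrefl : ∀ s ∈ S, s ≠ 1 ∧ s * s = 1 ∧
      Module.finrank ℂ (LinearMap.ker (s.toLinearMap - LinearMap.id)) + 1 =
        Module.finrank ℂ V)
    (VG : Submodule ℂ V) (hVG : ∀ v : V, v ∈ VG ↔ ∀ g ∈ G, g v = v)
    (Inv : Submodule ℂ (ExteriorAlgebra ℂ V))
    (hInv : ∀ x : ExteriorAlgebra ℂ V,
      x ∈ Inv ↔ ∀ g ∈ G, ExteriorAlgebra.map ((g : V ≃ₗ[ℂ] V).toLinearMap) x = x) :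
    Module.finrank ℂ Inv = 2 ^ Module.finrank ℂ VG :=
  finrank_exteriorAlgebra_invariants_of_reflection_group_general G S hgen
    (fun s hs ↦ isDiagonalizableReflection_of_pow_eq_one (n := 2)
      (mem_dilatransvections_of_finrank_ker_add_one (hrefl s hs).2.2) (hrefl s hs).1
      two_ne_zero (by rw [sq, (hrefl s hs).2.1])) VG hVG Inv hInv
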